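/- Let M be a matching of maximum weight among all matchings of size n/3 in G. Then there exists a set N of edges of G such that: every edge of N either has both endpoints in V(M) lying in two distinct edges of M, or has exactly one endpoint in V(M); no edge of M contains an endpoint of more than one edge of N; no two edges of N share a vertex outside V(M); and c(N) ≥ (1/4)·c(E_1) + (1/2)·c(E_2) + c(E_3). -/

import Mathlib

open Finset
open scoped Classical

namespace MW3PP

/-- A 3-path `xyz`: a path on three distinct vertices with middle vertex `y`. -/
structure P3 (V : Type*) where
  x : V
  y : V
  z : V
  hxy : x ≠ y
  hyz : y ≠ z
  hxz : x ≠ z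

variable {V : Type*} [Fintype V] [DecidableEq V]

/-- The vertex set of a 3-path. -/
def P3.verts (p : P3 V) : Finset V := {p.x, p.y, p.z}

/-- The two edges of a 3-path. -/
def P3.edges (p : P3 V) : Finset (Sym2 V) := {s(p.x, p.y), s(p.y, p.z)}

/-- The weight of a 3-path. -/
def P3.wt (w : Sym2 V → ℝ) (p : P3 V) : ℝ := w s(p.x, p.y) + w s(p.y, p.z)

/-- The total weight of a set of edges. -/
def ew (w : Sym2 V → ℝ) (F : Finset (Sym2 V)) : ℝ := ∑ e ∈ F, w e

/-- The total weight of a set of 3-paths. -/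
def pw (w : Sym2 V → ℝ) (P : Finset (P3 V)) : ℝ := ∑ p ∈ P, p.wt w

/-- `∑_{xyz ∈ S} max (w (xy)) (w (yz))`. -/
def maxSum (w : Sym2 V → ℝ) (S : Finset (P3 V)) : ℝ :=
  ∑ p ∈ S, max (w s(p.x, p.y)) (w s(p.y, p.z))

/-- A perfect 3-path packing: `n/3` pairwise vertex-disjoint 3-paths covering all vertices. -/
def IsPacking (P : Finset (P3 V)) : Prop :=
  P.card = Fintype.card V / 3 ∧
  (∀ p ∈ P, ∀ q ∈ P, p ≠ q → Disjoint p.verts q.verts) ∧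
  (∀ v : V, ∃ p ∈ P, v ∈ p.verts)

/-- A maximum-weight perfect 3-path packing. -/
def IsMaxPacking (w : Sym2 V → ℝ) (P : Finset (P3 V)) : Prop :=
  IsPacking P ∧ ∀ Q : Finset (P3 V), IsPacking Q → pw w Q ≤ pw w P

/-- A matching: a set of pairwise vertex-disjoint (non-loop) edges. -/
def IsMatching (M : Finset (Sym2 V)) : Prop :=
  (∀ e ∈ M, ¬ e.IsDiag) ∧
  ∀ e ∈ M, ∀ f ∈ M, e ≠ f → ∀ v : V, v ∈ e → v ∉ f

/-- A maximum-weight matching among all matchings of size `k`. -/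
def IsMaxMatchingOfSize (w : Sym2 V → ℝ) (k : ℕ) (M : Finset (Sym2 V)) : Prop :=
  IsMatching M ∧ M.card = k ∧
  ∀ M' : Finset (Sym2 V), IsMatching M' → M'.card = k → ew w M' ≤ ew w M

/-- `v ∈ V(M)` : vertex `v` is covered by the matching `M`. -/
def covered (M : Finset (Sym2 V)) (v : V) : Prop := ∃ e ∈ M, v ∈ e

/-- `e_u` : the edge of `M` containing `u` (junk value if there is none). -/
noncomputable def eMatch (M : Finset (Sym2 V)) (u : V) : Sym2 V :=
  if h : ∃ e ∈ M, u ∈ e then h.choose else s(u, u)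

/-- The cost `c` of an edge with respect to a matching `M`:
`c(uv) = w(uv) - min (w (e_u)) (w (e_v))` if both endpoints are covered by `M`,
and `c(uv) = w(uv)` otherwise. -/
noncomputable def cost (w : Sym2 V → ℝ) (M : Finset (Sym2 V)) : Sym2 V → ℝ :=
  Sym2.lift ⟨fun u v =>
    if covered M u ∧ covered M v then
      w s(u, v) - min (w (eMatch M u)) (w (eMatch M v))
    else w s(u, v), by
      intro u v
      dsimp only
      by_cases h : covered M u ∧ covered M v
      · rw [if_pos h, if_pos (show covered M v ∧ covered M u from ⟨h.2, h.1⟩),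
          Sym2.eq_swap, min_comm]
      · rw [if_neg h, if_neg (show ¬(covered M v ∧ covered M u) from fun h' => h ⟨h'.2, h'.1⟩),
          Sym2.eq_swap]⟩

/-- The total cost of a set of edges. -/
noncomputable def cw (w : Sym2 V → ℝ) (M F : Finset (Sym2 V)) : ℝ := ∑ e ∈ F, cost w M e

/-- The number of vertices of the 3-path `p` covered by `M`. -/
noncomputable def kcnt (M : Finset (Sym2 V)) (p : P3 V) : ℕ :=
  (p.verts.filter fun v => covered M v).card

/-- Exactly one of the two edges of `p` lies in `M`. -/
def exOne (M : Finset (Sym2 V)) (p : P3 V) : Prop :=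
  (s(p.x, p.y) ∈ M ∧ s(p.y, p.z) ∉ M) ∨ (s(p.x, p.y) ∉ M ∧ s(p.y, p.z) ∈ M)

def cls1 (M : Finset (Sym2 V)) (p : P3 V) : Prop := kcnt M p = 0
def cls2 (M : Finset (Sym2 V)) (p : P3 V) : Prop := kcnt M p = 1 ∧ ¬ covered M p.y
def cls3 (M : Finset (Sym2 V)) (p : P3 V) : Prop := kcnt M p = 1 ∧ covered M p.y
def cls4 (M : Finset (Sym2 V)) (p : P3 V) : Prop := kcnt M p = 2 ∧ ¬ covered M p.y
def cls5 (M : Finset (Sym2 V)) (p : P3 V) : Prop := kcnt M p = 2 ∧ covered M p.y ∧ exOne M p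
def cls6 (M : Finset (Sym2 V)) (p : P3 V) : Prop :=
  kcnt M p = 2 ∧ covered M p.y ∧ s(p.x, p.y) ∉ M ∧ s(p.y, p.z) ∉ M
def cls7 (M : Finset (Sym2 V)) (p : P3 V) : Prop := kcnt M p = 3 ∧ exOne M p
def cls8 (M : Finset (Sym2 V)) (p : P3 V) : Prop :=
  kcnt M p = 3 ∧ s(p.x, p.y) ∉ M ∧ s(p.y, p.z) ∉ M

/-- The subset of a set of 3-paths satisfying a predicate. -/
noncomputable def psel (P : Finset (P3 V)) (c : P3 V → Prop) : Finset (P3 V) := P.filter c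

/-- The set of all edges of the 3-paths in `S`. -/
def Esub (S : Finset (P3 V)) : Finset (Sym2 V) := S.biUnion P3.edges

/-- The heaviest edge of a 3-path (the edge `xy` in case of a tie). -/
noncomputable def heavy (w : Sym2 V → ℝ) (p : P3 V) : Sym2 V :=
  if w s(p.y, p.z) ≤ w s(p.x, p.y) then s(p.x, p.y) else s(p.y, p.z)

noncomputable def X1 (w : Sym2 V → ℝ) (P : Finset (P3 V)) (M : Finset (Sym2 V)) :
    Finset (Sym2 V) := (psel P (cls1 M)).image (heavy w)
noncomputable def X2 (P : Finset (P3 V)) (M : Finset (Sym2 V)) : Finset (Sym2 V) :=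
  (psel P (cls2 M)).image fun p => if covered M p.x then s(p.x, p.y) else s(p.y, p.z)
noncomputable def X3 (w : Sym2 V → ℝ) (P : Finset (P3 V)) (M : Finset (Sym2 V)) :
    Finset (Sym2 V) := (psel P (cls3 M)).image (heavy w)
noncomputable def X4 (w : Sym2 V → ℝ) (P : Finset (P3 V)) (M : Finset (Sym2 V)) :
    Finset (Sym2 V) := (psel P (cls4 M)).image (heavy w)
noncomputable def X5 (P : Finset (P3 V)) (M : Finset (Sym2 V)) : Finset (Sym2 V) :=
  (psel P (cls5 M)).image fun p => if s(p.x, p.y) ∈ M then s(p.y, p.z) else s(p.x, p.y)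
noncomputable def X6 (P : Finset (P3 V)) (M : Finset (Sym2 V)) : Finset (Sym2 V) :=
  (psel P (cls6 M)).image fun p => if covered M p.x then s(p.y, p.z) else s(p.x, p.y)
noncomputable def X7 (P : Finset (P3 V)) (M : Finset (Sym2 V)) : Finset (Sym2 V) :=
  (psel P (cls7 M)).image fun p => if s(p.x, p.y) ∈ M then s(p.y, p.z) else s(p.x, p.y)
noncomputable def X8 (w : Sym2 V → ℝ) (P : Finset (P3 V)) (M : Finset (Sym2 V)) :
    Finset (Sym2 V) := (psel P (cls8 M)).image (heavy w)

noncomputable def Y1 (w : Sym2 V → ℝ) (P : Finset (P3 V)) (M : Finset (Sym2 V)) :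
    Finset (Sym2 V) := Esub (psel P (cls1 M)) \ X1 w P M
noncomputable def Y2 (P : Finset (P3 V)) (M : Finset (Sym2 V)) : Finset (Sym2 V) :=
  Esub (psel P (cls2 M)) \ X2 P M
noncomputable def Y3 (w : Sym2 V → ℝ) (P : Finset (P3 V)) (M : Finset (Sym2 V)) :
    Finset (Sym2 V) := Esub (psel P (cls3 M)) \ X3 w P M
noncomputable def Y4 (w : Sym2 V → ℝ) (P : Finset (P3 V)) (M : Finset (Sym2 V)) :
    Finset (Sym2 V) := Esub (psel P (cls4 M)) \ X4 w P M
noncomputable def Y5 (P : Finset (P3 V)) (M : Finset (Sym2 V)) : Finset (Sym2 V) :=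
  Esub (psel P (cls5 M)) \ X5 P M
noncomputable def Y6 (P : Finset (P3 V)) (M : Finset (Sym2 V)) : Finset (Sym2 V) :=
  Esub (psel P (cls6 M)) \ X6 P M
noncomputable def Y7 (P : Finset (P3 V)) (M : Finset (Sym2 V)) : Finset (Sym2 V) :=
  Esub (psel P (cls7 M)) \ X7 P M
noncomputable def Y8 (w : Sym2 V → ℝ) (P : Finset (P3 V)) (M : Finset (Sym2 V)) :
    Finset (Sym2 V) := Esub (psel P (cls8 M)) \ X8 w P M

/-- An edge is a middle edge (w.r.t. `M`) if exactly one of its endpoints lies in `V(M)`. -/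
def isMiddle (M : Finset (Sym2 V)) (e : Sym2 V) : Prop :=
  ∃ u v : V, e = s(u, v) ∧ covered M u ∧ ¬ covered M v

/-- Two edges share a vertex. -/
def shares (e f : Sym2 V) : Prop := ∃ v, v ∈ e ∧ v ∈ f

/-- `g` is a middle edge of some 3-path in `S`. -/
def middleIn (M : Finset (Sym2 V)) (S : Finset (P3 V)) (g : Sym2 V) : Prop :=
  (∃ p ∈ S, g ∈ p.edges) ∧ isMiddle M g

/-- The 3-paths of `P` lying in classes 2, 3 or 4. -/
noncomputable def P234 (P : Finset (P3 V)) (M : Finset (Sym2 V)) : Finset (P3 V) :=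
  psel P fun p => cls2 M p ∨ cls3 M p ∨ cls4 M p

/-- `M_1`: edges of `M` sharing a vertex with at least one middle edge of a 3-path of `P*_6`. -/
noncomputable def Mset1 (P : Finset (P3 V)) (M : Finset (Sym2 V)) : Finset (Sym2 V) :=
  M.filter fun f => ∃ g, middleIn M (psel P (cls6 M)) g ∧ shares f g

/-- `M_2`: edges of `M` sharing a vertex with at least one middle edge, all middle edges met
belonging to 3-paths of `P*_2 ∪ P*_3 ∪ P*_4`. -/
noncomputable def Mset2 (P : Finset (P3 V)) (M : Finset (Sym2 V)) : Finset (Sym2 V) :=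
  M.filter fun f =>
    (∃ g, middleIn M P g ∧ shares f g) ∧
    ∀ g, middleIn M P g → shares f g → middleIn M (P234 P M) g

/-- `M_3 = M ∩ E(P*_7)`. -/
noncomputable def Mset3 (P : Finset (P3 V)) (M : Finset (Sym2 V)) : Finset (Sym2 V) :=
  M ∩ Esub (psel P (cls7 M))

/-- `M_4 = M ∩ E(P*_5)`. -/
noncomputable def Mset4 (P : Finset (P3 V)) (M : Finset (Sym2 V)) : Finset (Sym2 V) :=
  M ∩ Esub (psel P (cls5 M))

/-- The middle edges of 3-paths of `P*_6`. -/
noncomputable def mid6 (P : Finset (P3 V)) (M : Finset (Sym2 V)) : Finset (Sym2 V) :=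
  (Esub (psel P (cls6 M))).filter (isMiddle M)

/-- `M'_1`: edges of `M_1` meeting exactly one middle edge of a 3-path of `P*_6` and
no middle edge of a 3-path of `P*_2 ∪ P*_3 ∪ P*_4`. -/
noncomputable def Mset1' (P : Finset (P3 V)) (M : Finset (Sym2 V)) : Finset (Sym2 V) :=
  (Mset1 P M).filter fun f =>
    ((mid6 P M).filter fun g => shares f g).card = 1 ∧
    ∀ g, middleIn M (P234 P M) g → ¬ shares f g

/-- `M''_1`: edges of `M_1` meeting two middle edges of 3-paths of `P*_6`. -/
noncomputable def Mset1'' (P : Finset (P3 V)) (M : Finset (Sym2 V)) : Finset (Sym2 V) :=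
  (Mset1 P M).filter fun f => ((mid6 P M).filter fun g => shares f g).card = 2

/-- `M'''_1`: edges of `M_1` meeting exactly one middle edge of a 3-path of `P*_6` and
at least one middle edge of a 3-path of `P*_2 ∪ P*_3 ∪ P*_4`. -/
noncomputable def Mset1''' (P : Finset (P3 V)) (M : Finset (Sym2 V)) : Finset (Sym2 V) :=
  (Mset1 P M).filter fun f =>
    ((mid6 P M).filter fun g => shares f g).card = 1 ∧
    ∃ g, middleIn M (P234 P M) g ∧ shares f g

/-- Assumption on `P*`: for every 3-path `xyz ∈ P*` with `y ∉ V(M)` and `x, z ∈ V(M)`,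
the vertices `x` and `z` lie in two distinct edges of `M`. -/
def Ass (P : Finset (P3 V)) (M : Finset (Sym2 V)) : Prop :=
  ∀ p ∈ P, ¬ covered M p.y → covered M p.x → covered M p.z →
    ∃ e ∈ M, ∃ f ∈ M, p.x ∈ e ∧ p.z ∈ f ∧ e ≠ f

/-- An admissible edge w.r.t. `M`: either both endpoints are in `V(M)` and lie in two distinct
edges of `M`, or exactly one endpoint is in `V(M)`. -/
def goodEdge (M : Finset (Sym2 V)) (e : Sym2 V) : Prop :=
  (∃ u v : V, e = s(u, v) ∧ covered M u ∧ covered M v ∧ ∀ f ∈ M, ¬(u ∈ f ∧ v ∈ f)) ∨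
  (∃ u v : V, e = s(u, v) ∧ covered M u ∧ ¬ covered M v)

/-!
Let two edges of the packing conflict when they share a vertex or are joined by an edge of `M`; any
set of pairwise non-conflicting edges in `E_1 ∪ E_2 ∪ E_3` satisfies the conditions on `N`. Assign
to each edge of `E_1`, `E_2`, `E_3` a set of 1, 2, 4 of four colours respectively, so that
conflicting edges receive disjoint sets. The four colour classes, freed of their edges of negative
cost, have total cost at least `c(E_1) + 2 c(E_2) + 4 c(E_3)`, and the best of them serves as `N`.

Such an assignment is built greedily: an edge can be coloured last in a set `T` of edges if its
demand and those of its neighbours in `T` sum to at most 4. An edge of `E_3` conflicts with no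
coloured edge of another 3-path, since its endpoints are uncovered or matched within its own 3-path.
An edge of `E_2` has one such endpoint, and conflicts of total demand at most 2 arise at the other
one once `T` contains no edge of `E_3`. When only `E_1` is left, an edge has more than three
neighbours only if one of its endpoints is matched to the middle vertex of a 3-path with both edges
in `T`. The 3-paths whose middle vertices are matched to each other in this way are coloured
beforehand. To this end the two edges of each 3-path are split between two classes with two reserved
colours each; the conflicts within a class form a union of two matchings, which is bipartite. Away
from these 3-paths, such an endpoint is an end vertex, and distinct end vertices are matched to
distinct middle vertices, each of which accounts for two edges; counting shows that some edge of `T`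
has at most three neighbours.
-/

section Multicoloring

variable {X C : Type*} {G : SimpleGraph X} {d : X → ℕ} {A B : Finset X} {S : X → Finset C}

/-- An assignment to each vertex `x` of `A` of a set of `d x` colours, adjacent vertices of `A`
receiving disjoint sets. The values of `S` outside `A` are irrelevant. -/
structure IsMulticoloring (G : SimpleGraph X) (d : X → ℕ) (A : Finset X) (S : X → Finset C) :
    Prop where
  card_eq : ∀ x ∈ A, (S x).card = d x
  disjoint : ∀ x ∈ A, ∀ y ∈ A, G.Adj x y → Disjoint (S x) (S y)

namespace IsMulticoloring

theorem exists_insert [Fintype C] [DecidableEq X] [DecidableRel G.Adj]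
    (hS : IsMulticoloring G d A S) {x : X}
    (hx : d x + ∑ y ∈ A with G.Adj x y, d y ≤ Fintype.card C) :
    ∃ S' : X → Finset C, IsMulticoloring G d (insert x A) S' := by
  let used := {y ∈ A | G.Adj x y}.biUnion S
  have card_used : used.card ≤ ∑ y ∈ A with G.Adj x y, d y :=
    card_biUnion_le.trans (sum_le_sum fun y hy => (hS.card_eq y (mem_filter.1 hy).1).le)
  obtain ⟨t, ht, card_t⟩ : ∃ t ⊆ usedᶜ, t.card = d x :=
    exists_subset_card_eq (by rw [card_compl]; omega)
  have t_disjoint : ∀ y ∈ A, G.Adj x y → Disjoint t (S y) := fun y hy hxy =>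
    (disjoint_compl_left.mono_left ht).mono_right
      (subset_biUnion_of_mem S (mem_filter.2 ⟨hy, hxy⟩))
  have update_eq : ∀ y, y ≠ x → Function.update S x t y = S y := fun y hy => by simp [hy]
  refine ⟨Function.update S x t, fun y hy => ?_, fun y hy z hz hyz => ?_⟩
  · obtain rfl | hyx := eq_or_ne y x
    · simpa using card_t
    · rw [update_eq y hyx, hS.card_eq y (mem_of_mem_insert_of_ne hy hyx)]
  · obtain rfl | hyx := eq_or_ne y x
    · rw [Function.update_self, update_eq z hyz.ne']
      exact t_disjoint z (mem_of_mem_insert_of_ne hz hyz.ne') hyz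
    obtain rfl | hzx := eq_or_ne z x
    · rw [Function.update_self, update_eq y hyx]
      exact (t_disjoint y (mem_of_mem_insert_of_ne hy hyx) hyz.symm).symm
    · rw [update_eq y hyx, update_eq z hzx]
      exact hS.disjoint y (mem_of_mem_insert_of_ne hy hyx) z (mem_of_mem_insert_of_ne hz hzx) hyz

theorem exists_of_degenerate [Fintype C] [DecidableRel G.Adj] (hS : IsMulticoloring G d B S)
    (hBA : B ⊆ A) (h : ∀ T ⊆ A, B ⊂ T →
      ∃ x ∈ T, x ∉ B ∧ d x + ∑ y ∈ T with G.Adj x y, d y ≤ Fintype.card C) :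
    ∃ S' : X → Finset C, IsMulticoloring G d A S' := by
  induction A using Finset.strongInduction with
  | H A ih =>
    obtain rfl | hBA' := hBA.eq_or_ssubset
    · exact ⟨S, hS⟩
    obtain ⟨x, hxA, hxB, hx⟩ := h A Subset.rfl hBA'
    obtain ⟨S', hS'⟩ := ih (A.erase x) (erase_ssubset hxA) (subset_erase.2 ⟨hBA, hxB⟩)
      fun T hT => h T (hT.trans (erase_subset x A))
    have degree_le : ∑ y ∈ A.erase x with G.Adj x y, d y ≤ ∑ y ∈ A with G.Adj x y, d y :=
      sum_le_sum_of_subset (filter_subset_filter _ (erase_subset x A))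
    rw [← insert_erase hxA]
    exact hS'.exists_insert (by omega)

theorem exists_isIndepSet [Fintype C] [Nonempty C] {R : Type*} [AddCommGroup R] [LinearOrder R]
    [IsOrderedAddMonoid R] (hS : IsMulticoloring G d A S) (c : X → R) :
    ∃ I ⊆ A, G.IsIndepSet (I : Set X) ∧
      ∑ x ∈ A, d x • c x ≤ Fintype.card C • ∑ x ∈ I, c x := by
  -- One colour class may carry a very negative cost, so vertices of negative cost are left out.
  let I : C → Finset X := fun a => {x ∈ A | a ∈ S x ∧ 0 ≤ c x}
  obtain ⟨a, -, ha⟩ := exists_max_image univ (fun a => ∑ x ∈ I a, c x) univ_nonempty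
  refine ⟨I a, filter_subset _ _, fun x hx y hy _ hxy => ?_, ?_⟩
  · obtain ⟨hxA, hax, -⟩ := mem_filter.1 hx
    obtain ⟨hyA, hay, -⟩ := mem_filter.1 hy
    exact disjoint_left.1 (hS.disjoint x hxA y hyA hxy) hax hay
  · calc ∑ x ∈ A, d x • c x ≤ ∑ x ∈ A, (S x).card • max (c x) 0 := sum_le_sum fun x hx => by
          rw [hS.card_eq x hx]; exact nsmul_le_nsmul_right (le_max_left _ _) _
      _ = ∑ x ∈ A, ∑ a, if a ∈ S x ∧ 0 ≤ c x then c x else 0 := sum_congr rfl fun x _ => by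
          by_cases hx : 0 ≤ c x
          · simp [hx]
          · simp [hx, (not_le.1 hx).le]
      _ = ∑ a, ∑ x ∈ I a, c x := by
          rw [sum_comm]; exact sum_congr rfl fun a _ => (sum_filter _ _).symm
      _ ≤ Fintype.card C • ∑ x ∈ I a, c x := sum_le_card_nsmul _ _ _ ha

end IsMulticoloring

end Multicoloring

theorem eq_empty_of_injOn_prod_bool {α : Type*} {D : Finset (α × Bool)} {r : α × Bool → α}
    (mem_D : ∀ h ∈ D, ∀ b, (r h, b) ∈ D) (r_injOn : Set.InjOn r D) : D = ∅ := by
  have card_le : (D ×ˢ (univ : Finset Bool)).card ≤ D.card := by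
    refine card_le_card_of_injOn (fun k => (r k.1, k.2))
      (fun k hk => mem_D k.1 (mem_product.1 hk).1 k.2) fun k hk k' hk' heq => ?_
    obtain ⟨hr, hb⟩ := Prod.mk.inj heq
    exact Prod.ext (r_injOn (mem_product.1 hk).1 (mem_product.1 hk').1 hr) hb
  rw [card_product, card_univ, Fintype.card_bool] at card_le
  exact card_eq_zero.1 (by omega)

section TwoMatchings

open Equiv.Perm

variable {X Y : Type*}

theorem mul_zpow_mul_of_mul_self {Γ : Type*} [Group Γ] {σ τ : Γ} (hσ : σ * σ = 1)
    (hτ : τ * τ = 1) (k : ℤ) : σ * (σ * τ) ^ k = (σ * τ) ^ (-k) * σ := by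
  have hσ' : σ⁻¹ = σ := inv_eq_of_mul_eq_one_left hσ
  have hτ' : τ⁻¹ = τ := inv_eq_of_mul_eq_one_left hτ
  have : SemiconjBy σ (σ * τ) (σ * τ)⁻¹ := by
    simp [SemiconjBy, mul_assoc, hσ', hτ', hσ, ← mul_assoc σ σ]
  rw [zpow_neg, ← inv_zpow]
  exact (this.zpow_right k).eq

theorem not_sameCycle_mul_of_mul_self {σ τ : Equiv.Perm Y} (hσ : σ * σ = 1) (hτ : τ * τ = 1)
    (hσ' : ∀ y, σ y ≠ y) (hτ' : ∀ y, τ y ≠ y) (y : Y) : ¬ SameCycle (σ * τ) y (σ y) := by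
  -- `σ` and `τ` act on the orbit as reflections of `ℤ`, one of which has an integral centre.
  rintro ⟨k, hk⟩
  have reflect : ∀ j, σ (((σ * τ) ^ j) y) = ((σ * τ) ^ (k - j)) y := fun j => by
    rw [← mul_apply, mul_zpow_mul_of_mul_self hσ hτ, mul_apply, ← hk, ← mul_apply, ← zpow_add]
    congr 2
    ring
  obtain ⟨j, rfl | rfl⟩ := Int.even_or_odd' k
  · refine hσ' (((σ * τ) ^ j) y) ((reflect j).trans ?_)
    congr 2; ring
  · refine hτ' (((σ * τ) ^ j) y) ?_
    have : τ = σ * (σ * τ) := by rw [← mul_assoc, hσ, one_mul]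
    calc τ (((σ * τ) ^ j) y) = σ (((σ * τ) ^ (j + 1)) y) := by
          rw [add_comm, zpow_one_add, mul_apply (σ * τ), ← mul_apply σ, ← this]
      _ = _ := by rw [reflect]; congr 2; ring

theorem exists_bool_coloring_of_involutions {σ τ : Equiv.Perm Y} (hσ : σ * σ = 1) (hτ : τ * τ = 1)
    (hσ' : ∀ y, σ y ≠ y) (hτ' : ∀ y, τ y ≠ y) :
    ∃ c : Y → Bool, ∀ y, c (σ y) ≠ c y ∧ c (τ y) ≠ c y := by
  -- `σ` and `τ` both exchange the orbit of `y` with that of `σ y`; comparing the two yields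
  -- the colour.
  let orbit : Y → Quotient (SameCycle.setoid (σ * τ)) := Quotient.mk _
  let _ : LinearOrder (Quotient (SameCycle.setoid (σ * τ))) := linearOrderOfSTO WellOrderingRel
  have orbit_σ : ∀ y, orbit y ≠ orbit (σ y) := fun y h =>
    not_sameCycle_mul_of_mul_self hσ hτ hσ' hτ' y (Quotient.exact h)
  have orbit_τ : ∀ y, orbit (τ y) = orbit (σ y) := fun y =>
    Quotient.sound ⟨1, by simp [← mul_apply τ τ, hτ]⟩
  have orbit_στ : ∀ y, orbit (σ (τ y)) = orbit y := fun y =>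
    Quotient.sound ⟨-1, by simp [mul_apply]⟩
  have σσ : ∀ y, σ (σ y) = y := fun y => by rw [← mul_apply, hσ, one_apply]
  refine ⟨fun y => decide (orbit y < orbit (σ y)), fun y => ?_⟩
  beta_reduce
  rw [orbit_τ, orbit_στ, σσ, and_self, Ne, decide_eq_decide, not_iff]
  grind

theorem exists_involution_extending {G : SimpleGraph X}
    (hG : ∀ ⦃x y z⦄, G.Adj x y → G.Adj x z → y = z) :
    ∃ σ : Equiv.Perm (X × Bool), σ * σ = 1 ∧ (∀ y, σ y ≠ y) ∧
      ∀ x y i, G.Adj x y → σ (x, i) = (y, i) := by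
  -- The second copy of the vertices provides isolated vertices with a partner.
  let f : X × Bool → X × Bool := fun y =>
    if h : ∃ z, G.Adj y.1 z then (h.choose, y.2) else (y.1, !y.2)
  have f_adj : ∀ x y i, G.Adj x y → f (x, i) = (y, i) := fun x y i hxy => by
    have h : ∃ z, G.Adj x z := ⟨y, hxy⟩
    simp only [f, dif_pos h, hG h.choose_spec hxy]
  have f_isolated : ∀ x i, (¬ ∃ y, G.Adj x y) → f (x, i) = (x, !i) := fun x i h => dif_neg h
  have f_f : Function.Involutive f := fun ⟨x, i⟩ => by
    by_cases h : ∃ y, G.Adj x y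
    · obtain ⟨y, hxy⟩ := h
      rw [f_adj x y i hxy, f_adj y x i hxy.symm]
    · rw [f_isolated x i h, f_isolated x _ h, Bool.not_not]
  refine ⟨f_f.toPerm, Equiv.ext f_f, fun ⟨x, i⟩ => ?_, f_adj⟩
  rw [Function.Involutive.coe_toPerm]
  by_cases h : ∃ y, G.Adj x y
  · obtain ⟨y, hxy⟩ := h
    simpa [f_adj x y i hxy] using hxy.ne'
  · simp [f_isolated x i h]

theorem nonempty_bool_coloring_sup {G H : SimpleGraph X}
    (hG : ∀ ⦃x y z⦄, G.Adj x y → G.Adj x z → y = z)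
    (hH : ∀ ⦃x y z⦄, H.Adj x y → H.Adj x z → y = z) : Nonempty ((G ⊔ H).Coloring Bool) := by
  obtain ⟨σ, hσ, hσ', hGσ⟩ := exists_involution_extending hG
  obtain ⟨τ, hτ, hτ', hHτ⟩ := exists_involution_extending hH
  obtain ⟨c, hc⟩ := exists_bool_coloring_of_involutions hσ hτ hσ' hτ'
  refine ⟨.mk (fun x => c (x, false)) fun {x y} hxy => ?_⟩
  obtain hxy | hxy := hxy
  · simpa [hGσ x y _ hxy] using (hc (x, false)).1.symm
  · simpa [hHτ x y _ hxy] using (hc (x, false)).2.symm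

end TwoMatchings

section Matching

variable {U X : Type*} {M : Finset (Sym2 U)}

theorem IsMatching.ne (hM : IsMatching M) {u v : U} (h : s(u, v) ∈ M) : u ≠ v :=
  fun huv => hM.1 _ h (Sym2.mk_isDiag_iff.2 huv)

theorem IsMatching.eq_of_mem (hM : IsMatching M) {e f : Sym2 U} {u : U} (he : e ∈ M) (hf : f ∈ M)
    (hue : u ∈ e) (huf : u ∈ f) : e = f :=
  by_contra fun hef => hM.2 e he f hf hef u hue huf

theorem IsMatching.right_unique (hM : IsMatching M) {u v v' : U} (h : s(u, v) ∈ M)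
    (h' : s(u, v') ∈ M) : v = v' :=
  Sym2.congr_right.1 (hM.eq_of_mem h h' (Sym2.mem_mk_left u v) (Sym2.mem_mk_left u v'))

theorem IsMatching.left_unique (hM : IsMatching M) {u u' v : U} (h : s(u, v) ∈ M)
    (h' : s(u', v) ∈ M) : u = u' :=
  hM.right_unique (Sym2.eq_swap ▸ h) (Sym2.eq_swap ▸ h')

theorem covered_left {u v : U} (h : s(u, v) ∈ M) : covered M u :=
  ⟨_, h, Sym2.mem_mk_left u v⟩

theorem covered_right {u v : U} (h : s(u, v) ∈ M) : covered M v :=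
  ⟨_, h, Sym2.mem_mk_right u v⟩

theorem IsMatching.exists_bool_coloring_of_injOn (hM : IsMatching M) {D : Set X} {f g : X → U}
    (hf : D.InjOn f) (hg : D.InjOn g) :
    ∃ c : X → Bool, ∀ x ∈ D, ∀ y ∈ D, s(f x, f y) ∈ M ∨ s(g x, g y) ∈ M → c x ≠ c y := by
  let pullback (f : X → U) : SimpleGraph D :=
    (SimpleGraph.fromEdgeSet (M : Set (Sym2 U))).comap fun x => f x
  have pullback_adj {f : X → U} {x y : D} : (pullback f).Adj x y ↔ s(f x, f y) ∈ M := by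
    simpa [pullback] using hM.ne
  have pullback_unique {f : X → U} (hf : D.InjOn f) :
      ∀ ⦃x y z⦄, (pullback f).Adj x y → (pullback f).Adj x z → y = z := fun x y z hxy hxz =>
    Subtype.ext (hf y.2 z.2 (hM.right_unique (pullback_adj.1 hxy) (pullback_adj.1 hxz)))
  obtain ⟨c⟩ := nonempty_bool_coloring_sup (pullback_unique hf) (pullback_unique hg)
  refine ⟨Function.extend Subtype.val c fun _ => false, fun x hx y hy hxy => ?_⟩
  rw [Subtype.val_injective.extend_apply c _ ⟨x, hx⟩,
    Subtype.val_injective.extend_apply c _ ⟨y, hy⟩]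
  exact c.valid (hxy.imp pullback_adj.2 pullback_adj.2)

end Matching

section PathEdges

variable {U : Type*}

/-- The end vertex of a 3-path selected by `b`: `x` for `false` and `z` for `true`. -/
def P3.tip (p : P3 U) (b : Bool) : U := if b then p.z else p.x

/-- The edge of a 3-path ending in `p.tip b`. The edges of the 3-paths in `P` are thus indexed by
`P ×ˢ univ : Finset (P3 U × Bool)`, the two edges of one path being `(p, b)` and `(p, !b)`. -/
def P3.edge (p : P3 U) (b : Bool) : Sym2 U := s(p.y, p.tip b)

namespace P3

theorem y_ne_tip (p : P3 U) (b : Bool) : p.y ≠ p.tip b := by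
  cases b
  exacts [p.hxy.symm, p.hyz]

theorem tip_injective (p : P3 U) : Function.Injective p.tip := by
  rintro (_ | _) (_ | _) h
  exacts [rfl, (p.hxz h).elim, (p.hxz h.symm).elim, rfl]

theorem edge_injective (p : P3 U) : Function.Injective p.edge := fun _ _ h =>
  p.tip_injective (Sym2.congr_right.1 h)

variable [DecidableEq U]

theorem y_mem_verts (p : P3 U) : p.y ∈ p.verts := by simp [verts]

theorem tip_mem_verts (p : P3 U) (b : Bool) : p.tip b ∈ p.verts := by cases b <;> simp [verts, tip]

theorem mem_verts_of_mem_edge {p : P3 U} {b : Bool} {u : U} (hu : u ∈ p.edge b) : u ∈ p.verts := by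
  obtain rfl | rfl := Sym2.mem_iff.1 hu
  exacts [p.y_mem_verts, p.tip_mem_verts b]

end P3

variable [DecidableEq U] {P : Finset (P3 U)} (hP : (P : Set (P3 U)).PairwiseDisjoint P3.verts)
include hP

theorem injOn_y : (P : Set (P3 U)).InjOn P3.y := fun p hp q hq h =>
  hP.elim_finset hp hq p.y p.y_mem_verts (h ▸ q.y_mem_verts)

theorem tip_ne_y {p q : P3 U} (hp : p ∈ P) (hq : q ∈ P) (b : Bool) : p.tip b ≠ q.y := fun h => by
  obtain rfl := hP.elim_finset hp hq (p.tip b) (p.tip_mem_verts b) (h ▸ q.y_mem_verts)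
  exact p.y_ne_tip b h.symm

theorem tip_inj {p q : P3 U} (hp : p ∈ P) (hq : q ∈ P) {b b' : Bool} (h : p.tip b = q.tip b') :
    p = q ∧ b = b' := by
  obtain rfl := hP.elim_finset hp hq (p.tip b) (p.tip_mem_verts b) (h ▸ q.tip_mem_verts b')
  exact ⟨rfl, p.tip_injective h⟩

theorem injOn_edge :
    ((P ×ˢ univ : Finset (P3 U × Bool)) : Set (P3 U × Bool)).InjOn fun h => h.1.edge h.2 := by
  rintro ⟨p, b⟩ hp ⟨q, b'⟩ hq (h : p.edge b = q.edge b')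
  have hpq : p = q := hP.elim_finset (mem_product.1 hp).1 (mem_product.1 hq).1 (p.tip b)
    (p.tip_mem_verts b) (P3.mem_verts_of_mem_edge (by rw [← h]; exact Sym2.mem_mk_right _ _))
  subst hpq
  rw [p.edge_injective h]

end PathEdges

section Demand

variable {U : Type*} [DecidableEq U] {w : Sym2 U → ℝ} {M : Finset (Sym2 U)} {P : Finset (P3 U)}
  {p : P3 U} {b : Bool}

/-- Both edges of `p` belong to `E_1 = E(P*_6) ∪ E(P*_8)`. -/
def InE1 (M : Finset (Sym2 U)) (p : P3 U) : Prop := cls6 M p ∨ cls8 M p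

/-- The edge `p.edge b` belongs to `E_2 = X_2 ∪ X_3 ∪ X_4 ∪ X_7`. -/
def InE2 (w : Sym2 U → ℝ) (M : Finset (Sym2 U)) (p : P3 U) (b : Bool) : Prop :=
  cls2 M p ∧ covered M (p.tip b) ∨ (cls3 M p ∨ cls4 M p) ∧ p.edge b = heavy w p ∨
    cls7 M p ∧ p.edge b ∉ M

/-- The edge `p.edge b` belongs to `E_3 = X_5`. -/
def InE3 (M : Finset (Sym2 U)) (p : P3 U) (b : Bool) : Prop := cls5 M p ∧ p.edge b ∉ M

/-- Four times the coefficient of `c(p.edge b)` in `c(E_1) / 4 + c(E_2) / 2 + c(E_3)`. -/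
noncomputable def demand (w : Sym2 U → ℝ) (M : Finset (Sym2 U)) (h : P3 U × Bool) : ℕ :=
  (if InE1 M h.1 then 1 else 0) + (if InE2 w M h.1 h.2 then 2 else 0) +
    if InE3 M h.1 h.2 then 4 else 0

theorem kcnt_eq (M : Finset (Sym2 U)) (p : P3 U) :
    kcnt M p = (if covered M p.x then 1 else 0) + (if covered M p.y then 1 else 0) +
      (if covered M p.z then 1 else 0) := by
  rw [kcnt, card_filter, P3.verts, sum_insert, sum_insert, sum_singleton, add_assoc]
  · simpa using p.hyz
  · simpa using ⟨p.hxy, p.hxz⟩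

theorem not_inE1_of_inE2 (h : InE2 w M p b) : ¬ InE1 M p := by
  simp only [InE1, InE2, cls2, cls3, cls4, cls6, cls7, cls8, exOne] at *
  grind

theorem not_inE1_of_inE3 (h : InE3 M p b) : ¬ InE1 M p := by
  simp only [InE1, InE3, cls5, cls6, cls8, exOne] at *
  grind

theorem not_inE3_of_inE2 {b' : Bool} (h : InE2 w M p b) : ¬ InE3 M p b' := by
  simp only [InE2, InE3, cls2, cls3, cls4, cls5, cls7] at *
  grind

theorem not_inE2_not (h : InE2 w M p b) : ¬ InE2 w M p (!b) := by
  have edge_ne : p.edge b ≠ p.edge !b := p.edge_injective.ne (by simp)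
  cases b <;>
  simp only [InE2, cls2, cls3, cls4, cls7, exOne, kcnt_eq, P3.edge, P3.tip, Bool.not_true,
    Bool.not_false, if_true, Bool.false_eq_true, if_false, Sym2.eq_swap (a := p.x)] at * <;> grind

theorem not_inE3_not (h : InE3 M p b) : ¬ InE3 M p (!b) := by
  cases b <;>
  simp only [InE3, cls5, exOne, P3.edge, P3.tip, Bool.not_true,
    Bool.not_false, if_true, Bool.false_eq_true, if_false, Sym2.eq_swap (a := p.x)] at * <;> grind

theorem demand_eq_one_iff : demand w M (p, b) = 1 ↔ InE1 M p := by
  simp only [demand]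
  grind [not_inE1_of_inE2, not_inE1_of_inE3]

theorem demand_eq_two_iff : demand w M (p, b) = 2 ↔ InE2 w M p b := by
  simp only [demand]
  grind [not_inE1_of_inE2, not_inE1_of_inE3, not_inE3_of_inE2]

theorem demand_eq_four_iff : demand w M (p, b) = 4 ↔ InE3 M p b := by
  simp only [demand]
  grind [not_inE1_of_inE2, not_inE1_of_inE3, not_inE3_of_inE2]

theorem demand_ne_zero_iff :
    demand w M (p, b) ≠ 0 ↔ InE1 M p ∨ InE2 w M p b ∨ InE3 M p b := by
  simp only [demand]
  grind

theorem demand_not_eq_zero (h : InE2 w M p b ∨ InE3 M p b) : demand w M (p, !b) = 0 := by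
  simp only [demand]
  grind [not_inE1_of_inE2, not_inE1_of_inE3, not_inE3_of_inE2, not_inE2_not, not_inE3_not]

/-- Every vertex matched to `u` by `M` lies on the 3-path `p`. -/
def IsInternal (M : Finset (Sym2 U)) (p : P3 U) (u : U) : Prop := ∀ v, s(u, v) ∈ M → v ∈ p.verts

theorem isInternal_of_not_covered {u : U} (hu : ¬ covered M u) : IsInternal M p u :=
  fun _ h => (hu (covered_left h)).elim

theorem isInternal_y_of_edge_mem (hM : IsMatching M) (h : p.edge b ∈ M) :
    IsInternal M p p.y := fun _ hv => hM.right_unique h hv ▸ p.tip_mem_verts b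

theorem isInternal_y_of_exOne (hM : IsMatching M) (h : exOne M p) : IsInternal M p p.y := by
  obtain ⟨h, -⟩ | ⟨-, h⟩ := h
  exacts [isInternal_y_of_edge_mem hM (b := false) (by rwa [P3.edge, P3.tip, Sym2.eq_swap]),
    isInternal_y_of_edge_mem hM (b := true) h]

theorem isInternal_of_inE2 (hM : IsMatching M) (h : InE2 w M p b) :
    IsInternal M p p.y ∨ IsInternal M p (p.tip b) := by
  obtain ⟨h, -⟩ | ⟨h | h, -⟩ | ⟨h, -⟩ := h
  · exact .inl (isInternal_of_not_covered h.2)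
  · refine .inr (isInternal_of_not_covered ?_)
    cases b <;> simp only [cls3, kcnt_eq, P3.tip] at * <;> grind
  · exact .inl (isInternal_of_not_covered h.2)
  · exact .inl (isInternal_y_of_exOne hM h.2)

theorem isInternal_of_inE3 (hM : IsMatching M) (h : InE3 M p b) :
    IsInternal M p p.y ∧ IsInternal M p (p.tip b) := by
  refine ⟨isInternal_y_of_exOne hM h.1.2.2, isInternal_of_not_covered ?_⟩
  have hx : s(p.x, p.y) ∈ M → covered M p.x := covered_left
  have hz : s(p.y, p.z) ∈ M → covered M p.z := covered_right
  cases b <;>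
  simp only [InE3, cls5, exOne, kcnt_eq, P3.edge, P3.tip, Sym2.eq_swap (a := p.x)] at * <;> grind

theorem goodEdge_of_demand_ne_zero (h : demand w M (p, b) ≠ 0) :
    goodEdge M (p.edge b) := by
  have h : p.edge b ∉ M ∧ (covered M p.y ∨ covered M (p.tip b)) := by
    rw [demand_ne_zero_iff] at h
    have hxy : s(p.x, p.y) ∈ M → covered M p.x ∧ covered M p.y :=
      fun h => ⟨covered_left h, covered_right h⟩
    have hyz : s(p.y, p.z) ∈ M → covered M p.y ∧ covered M p.z :=
      fun h => ⟨covered_left h, covered_right h⟩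
    cases b <;>
    simp only [InE1, InE2, InE3, cls2, cls3, cls4, cls5, cls6, cls7, cls8, exOne, kcnt_eq, P3.edge,
      P3.tip, Sym2.eq_swap (a := p.x), Bool.false_eq_true, if_true, if_false] at * <;> grind
  obtain ⟨edge_notMem, hcov⟩ := h
  by_cases hy : covered M p.y <;> by_cases ht : covered M (p.tip b)
  · refine .inl ⟨p.y, p.tip b, rfl, hy, ht, fun f hf hyt => ?_⟩
    rw [(Sym2.mem_and_mem_iff (p.y_ne_tip b)).1 hyt] at hf
    exact edge_notMem hf
  · exact .inr ⟨p.y, p.tip b, rfl, hy, ht⟩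
  · exact .inr ⟨p.tip b, p.y, Sym2.eq_swap, ht, hy⟩
  · exact (hcov.elim hy ht).elim

theorem E1_eq_image : Esub (psel P (cls6 M)) ∪ Esub (psel P (cls8 M)) =
    {h ∈ P ×ˢ (univ : Finset Bool) | InE1 M h.1}.image fun h => h.1.edge h.2 := by
  ext e
  simp only [Esub, psel, InE1, P3.edges, P3.edge, P3.tip, mem_union, mem_biUnion, mem_filter,
    mem_image, mem_insert, mem_singleton, Prod.exists, Bool.exists_bool, Sym2.eq_swap (a := P3.x _)]
  grind

theorem E2_eq_image : X2 P M ∪ X3 w P M ∪ X4 w P M ∪ X7 P M =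
    {h ∈ P ×ˢ (univ : Finset Bool) | InE2 w M h.1 h.2}.image fun h => h.1.edge h.2 := by
  have X2_eq : X2 P M = {h ∈ P ×ˢ (univ : Finset Bool) |
      cls2 M h.1 ∧ covered M (h.1.tip h.2)}.image fun h => h.1.edge h.2 := by
    ext e
    simp only [X2, psel, cls2, kcnt_eq, P3.edge, P3.tip, mem_filter, mem_image, Prod.exists,
      Bool.exists_bool, Sym2.eq_swap (a := P3.x _)]
    grind
  have heavy_eq (c : P3 U → Prop) : (psel P c).image (heavy w) = {h ∈ P ×ˢ (univ : Finset Bool) |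
      c h.1 ∧ h.1.edge h.2 = heavy w h.1}.image fun h => h.1.edge h.2 := by
    ext e
    simp only [psel, heavy, P3.edge, P3.tip, mem_filter, mem_image, Prod.exists,
      Bool.exists_bool, Sym2.eq_swap (a := P3.x _)]
    grind
  have X7_eq : X7 P M = {h ∈ P ×ˢ (univ : Finset Bool) |
      cls7 M h.1 ∧ h.1.edge h.2 ∉ M}.image fun h => h.1.edge h.2 := by
    ext e
    simp only [X7, psel, cls7, exOne, P3.edge, P3.tip, mem_filter, mem_image, Prod.exists,
      Bool.exists_bool, Sym2.eq_swap (a := P3.x _)]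
    grind
  simp only [InE2, or_and_right, filter_or, image_union, union_assoc]
  rw [X2_eq, X3, X4, heavy_eq, heavy_eq, X7_eq]

theorem E3_eq_image : X5 P M =
    {h ∈ P ×ˢ (univ : Finset Bool) | InE3 M h.1 h.2}.image fun h => h.1.edge h.2 := by
  ext e
  simp only [X5, psel, InE3, cls5, exOne, P3.edge, P3.tip, mem_filter,
    mem_image, Prod.exists, Bool.exists_bool,
    Sym2.eq_swap (a := P3.x _)]
  grind

theorem sum_demand_nsmul_cost (hP : (P : Set (P3 U)).PairwiseDisjoint P3.verts) :
    ∑ h ∈ P ×ˢ (univ : Finset Bool), demand w M h • cost w M (h.1.edge h.2) =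
      cw w M (Esub (psel P (cls6 M)) ∪ Esub (psel P (cls8 M))) +
        2 * cw w M (X2 P M ∪ X3 w P M ∪ X4 w P M ∪ X7 P M) + 4 * cw w M (X5 P M) := by
  have cw_image (s : P3 U × Bool → Prop) :
      cw w M ({h ∈ P ×ˢ (univ : Finset Bool) | s h}.image fun h => h.1.edge h.2) =
        ∑ h ∈ P ×ˢ (univ : Finset Bool), if s h then cost w M (h.1.edge h.2) else 0 := by
    rw [cw, sum_image ((injOn_edge hP).mono (coe_subset.2 (filter_subset _ _))), sum_filter]
  rw [E1_eq_image, E2_eq_image, E3_eq_image, cw_image, cw_image, cw_image, mul_sum, mul_sum,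
    ← sum_add_distrib, ← sum_add_distrib]
  refine sum_congr rfl fun h _ => ?_
  simp only [demand, nsmul_eq_mul, Nat.cast_add, Nat.cast_ite, add_mul, ite_mul, mul_ite]
  simp

end Demand

section Conflict

variable {U : Type*} {M : Finset (Sym2 U)} {T : Finset (P3 U × Bool)} {p q r : P3 U} {b b' : Bool}
  {u : U}

/-- Two distinct edges of 3-paths conflict when they share a vertex or are joined by an edge of
`M`. The sets `N` sought are the independent sets of admissible edges. -/
def conflictGraph (M : Finset (Sym2 U)) : SimpleGraph (P3 U × Bool) where
  Adj h k := h ≠ k ∧ ∃ u ∈ h.1.edge h.2, ∃ v ∈ k.1.edge k.2, u = v ∨ s(u, v) ∈ M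
  symm := ⟨fun _ _ ⟨hne, u, hu, v, hv, huv⟩ =>
    ⟨hne.symm, v, hv, u, hu, huv.imp Eq.symm fun h => Sym2.eq_swap ▸ h⟩⟩
  loopless := ⟨fun _ h => h.1 rfl⟩

/-- The members of `T`, on 3-paths other than `p`, with an endpoint matched to `u` by `M`. -/
noncomputable def across (M : Finset (Sym2 U)) (T : Finset (P3 U × Bool)) (p : P3 U) (u : U) :
    Finset (P3 U × Bool) :=
  {k ∈ T | k.1 ≠ p ∧ ∃ v ∈ k.1.edge k.2, s(u, v) ∈ M}

theorem mid_mem_of_mem_across (hM : IsMatching M) (h : (r, false) ∈ across M T p u)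
    (h' : (r, true) ∈ across M T p u) : s(u, r.y) ∈ M := by
  obtain ⟨-, -, v, hv, huv⟩ := mem_filter.1 h
  obtain ⟨-, -, v', hv', huv'⟩ := mem_filter.1 h'
  obtain rfl := hM.right_unique huv huv'
  obtain rfl | hv := Sym2.mem_iff.1 hv
  · exact huv
  obtain rfl | hv' := Sym2.mem_iff.1 hv'
  · exact huv
  · exact (Bool.false_ne_true (r.tip_injective (hv.symm.trans hv'))).elim

variable [DecidableEq U] {P : Finset (P3 U)} {w : Sym2 U → ℝ}

theorem eq_not_or_exists_mem_of_adj (hP : (P : Set (P3 U)).PairwiseDisjoint P3.verts)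
    (hp : p ∈ P) (hq : q ∈ P) (h : (conflictGraph M).Adj (p, b) (q, b')) :
    (q, b') = (p, !b) ∨ q ≠ p ∧ ∃ u ∈ p.edge b, ∃ v ∈ q.edge b', s(u, v) ∈ M := by
  obtain ⟨hne, u, hu, v, hv, huv⟩ := h
  obtain rfl | hqp := eq_or_ne q p
  · left
    cases b <;> cases b' <;> simp_all
  · refine .inr ⟨hqp, u, hu, v, hv, huv.resolve_left ?_⟩
    rintro rfl
    exact hqp (hP.elim_finset hq hp u (P3.mem_verts_of_mem_edge hv) (P3.mem_verts_of_mem_edge hu))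

theorem neighbors_subset (hP : (P : Set (P3 U)).PairwiseDisjoint P3.verts) (hT : T ⊆ P ×ˢ univ)
    (hp : p ∈ P) : {k ∈ T | (conflictGraph M).Adj (p, b) k} ⊆
      insert (p, !b) (across M T p p.y ∪ across M T p (p.tip b)) := by
  rintro ⟨q, b'⟩ hk
  obtain ⟨hkT, hadj⟩ := mem_filter.1 hk
  have hq : q ∈ P := (mem_product.1 (hT hkT)).1
  obtain h | ⟨hqp, u, hu, v, hv, huv⟩ := eq_not_or_exists_mem_of_adj hP hp hq hadj
  · exact mem_insert.2 (.inl h)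
  · refine mem_insert_of_mem (mem_union.2 ((Sym2.mem_iff.1 hu).imp ?_ ?_)) <;>
    · rintro rfl
      exact mem_filter.2 ⟨hkT, hqp, v, hv, huv⟩

theorem across_eq_empty (hP : (P : Set (P3 U)).PairwiseDisjoint P3.verts) (hT : T ⊆ P ×ˢ univ)
    (hp : p ∈ P) (hu : IsInternal M p u) : across M T p u = ∅ := by
  refine filter_eq_empty_iff.2 fun k hk => ?_
  rintro ⟨hkp, v, hv, huv⟩
  exact hkp (hP.elim_finset (mem_product.1 (hT hk)).1 hp v (P3.mem_verts_of_mem_edge hv) (hu v huv))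

theorem fst_eq_of_mem_across (hM : IsMatching M)
    (hP : (P : Set (P3 U)).PairwiseDisjoint P3.verts) (hT : T ⊆ P ×ˢ univ) {h k : P3 U × Bool}
    (hh : h ∈ across M T p u) (hk : k ∈ across M T p u) : h.1 = k.1 := by
  obtain ⟨hhT, -, v, hv, huv⟩ := mem_filter.1 hh
  obtain ⟨hkT, -, v', hv', huv'⟩ := mem_filter.1 hk
  obtain rfl := hM.right_unique huv huv'
  exact hP.elim_finset (mem_product.1 (hT hhT)).1 (mem_product.1 (hT hkT)).1 v
    (P3.mem_verts_of_mem_edge hv) (P3.mem_verts_of_mem_edge hv')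

theorem exists_mid_of_one_lt_card_across (hM : IsMatching M)
    (hP : (P : Set (P3 U)).PairwiseDisjoint P3.verts) (hT : T ⊆ P ×ˢ univ)
    (h : 1 < (across M T p u).card) : ∃ r, s(u, r.y) ∈ M ∧ ∀ b, (r, b) ∈ T := by
  obtain ⟨⟨r, b⟩, hk, ⟨r', b'⟩, hk', hne⟩ := one_lt_card.1 h
  obtain rfl : r = r' := fst_eq_of_mem_across hM hP hT hk hk'
  have mem_across : ∀ c, (r, c) ∈ across M T p u := by
    intro c
    obtain rfl | rfl : c = b ∨ c = b' := by cases b <;> cases b' <;> cases c <;> simp_all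
    exacts [hk, hk']
  exact ⟨r, mid_mem_of_mem_across hM (mem_across _) (mem_across _),
    fun c => (mem_filter.1 (mem_across c)).1⟩

theorem demand_add_demand_not_le_two (h0 : demand w M (r, b) ≠ 0) (h2 : demand w M (r, b) ≤ 2) :
    demand w M (r, b) + demand w M (r, !b) ≤ 2 := by
  obtain h | h | h := demand_ne_zero_iff.1 h0
  · rw [demand_eq_one_iff.2 h, demand_eq_one_iff.2 h]
  · rwa [demand_not_eq_zero (.inl h)]
  · rwa [demand_not_eq_zero (.inr h)]

theorem sum_across_demand_le_two (hM : IsMatching M)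
    (hP : (P : Set (P3 U)).PairwiseDisjoint P3.verts) (hT : T ⊆ P ×ˢ univ)
    (hT0 : ∀ k ∈ T, demand w M k ≠ 0) (hT2 : ∀ k ∈ T, demand w M k ≤ 2) :
    ∑ k ∈ across M T p u, demand w M k ≤ 2 := by
  obtain h | ⟨⟨r, b⟩, hr⟩ := (across M T p u).eq_empty_or_nonempty
  · simp [h]
  have hrT : (r, b) ∈ T := (mem_filter.1 hr).1
  have across_subset : across M T p u ⊆ {(r, b), (r, !b)} := by
    rintro ⟨r', b'⟩ hk
    obtain rfl : r' = r := fst_eq_of_mem_across hM hP hT hk hr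
    cases b <;> cases b' <;> simp
  calc ∑ k ∈ across M T p u, demand w M k
      ≤ ∑ k ∈ {(r, b), (r, !b)}, demand w M k := sum_le_sum_of_subset across_subset
    _ = demand w M (r, b) + demand w M (r, !b) := sum_pair (by simp)
    _ ≤ 2 := demand_add_demand_not_le_two (hT0 _ hrT) (hT2 _ hrT)

/-- `p` contributes to `E_1` and its middle vertex is matched by `M` to the middle vertex of
another 3-path contributing to `E_1`. -/
def IsMidPaired (M : Finset (Sym2 U)) (P : Finset (P3 U)) (p : P3 U) : Prop :=
  InE1 M p ∧ ∃ q ∈ P, InE1 M q ∧ s(p.y, q.y) ∈ M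

theorem tip_y_notMem_of_isMidPaired (hM : IsMatching M)
    (hP : (P : Set (P3 U)).PairwiseDisjoint P3.verts) (hp : p ∈ P) (hr : IsMidPaired M P r) :
    s(p.tip b, r.y) ∉ M := fun h => by
  obtain ⟨-, q, hq, -, hrq⟩ := hr
  exact tip_ne_y hP hp hq b (hM.right_unique (Sym2.eq_swap ▸ h) hrq)

theorem exists_isMulticoloring_isMidPaired (hM : IsMatching M)
    (hP : (P : Set (P3 U)).PairwiseDisjoint P3.verts) :
    ∃ S : P3 U × Bool → Finset (Bool × Bool), IsMulticoloring (conflictGraph M) (demand w M)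
      {h ∈ P ×ˢ univ | IsMidPaired M P h.1} S := by
  -- The edges `(p, false)` share two colours and the edges `(p, true)` the other two, so only
  -- conflicts between edges with the same `b` matter; these form a union of two matchings.
  choose c hc using fun b => hM.exists_bool_coloring_of_injOn (injOn_y hP)
    (g := fun p => p.tip b) fun p hp q hq h => (tip_inj hP hp hq h).1
  refine ⟨fun h => {(h.2, c h.2 h.1)}, fun ⟨p, b⟩ hp => ?_, fun ⟨p, b⟩ hp ⟨q, b'⟩ hq hadj => ?_⟩
  · exact (demand_eq_one_iff.2 (mem_filter.1 hp).2.1).symm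
  simp only [mem_filter, mem_product, mem_univ, and_true] at hp hq
  rw [disjoint_singleton, Ne, Prod.mk.injEq]
  rintro ⟨rfl, hcpq⟩
  obtain h | ⟨-, u, hu, v, hv, huv⟩ := eq_not_or_exists_mem_of_adj hP hp.1 hq.1 hadj
  · simp at h
  refine hc b p hp.1 q hq.1 ?_ hcpq
  obtain rfl | rfl := Sym2.mem_iff.1 hu <;> obtain rfl | rfl := Sym2.mem_iff.1 hv
  · exact .inl huv
  · exact (tip_y_notMem_of_isMidPaired hM hP hq.1 hp.2 (Sym2.eq_swap ▸ huv)).elim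
  · exact (tip_y_notMem_of_isMidPaired hM hP hp.1 hq.2 huv).elim
  · exact .inr huv

section Degeneracy

/-- The demand of `h` together with the demands of the members of `T` in conflict with it. With
that many colours available, `h` can be coloured after the rest of `T`. -/
noncomputable def closedDemand (w : Sym2 U → ℝ) (M : Finset (Sym2 U)) (T : Finset (P3 U × Bool))
    (h : P3 U × Bool) : ℕ :=
  demand w M h + ∑ k ∈ T with (conflictGraph M).Adj h k, demand w M k

variable (hM : IsMatching M) (hP : (P : Set (P3 U)).PairwiseDisjoint P3.verts)
  (hT : T ⊆ P ×ˢ univ)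
include hP hT

theorem closedDemand_le (hp : p ∈ P) : closedDemand w M T (p, b) ≤
    demand w M (p, b) + (demand w M (p, !b) +
      (∑ k ∈ across M T p p.y, demand w M k + ∑ k ∈ across M T p (p.tip b), demand w M k)) := by
  have sum_union_le (s t : Finset (P3 U × Bool)) :
      ∑ k ∈ s ∪ t, demand w M k ≤ ∑ k ∈ s, demand w M k + ∑ k ∈ t, demand w M k :=
    le_self_add.trans_eq sum_union_inter
  refine Nat.add_le_add_left ((sum_le_sum_of_subset (neighbors_subset hP hT hp)).trans ?_) _
  rw [insert_eq]
  refine (sum_union_le _ _).trans ?_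
  rw [sum_singleton]
  exact Nat.add_le_add_left (sum_union_le _ _) _

include hM

theorem closedDemand_le_four_of_inE3 (hp : p ∈ P) (h : InE3 M p b) :
    closedDemand w M T (p, b) ≤ 4 := by
  obtain ⟨internal_y, internal_tip⟩ := isInternal_of_inE3 hM h
  simpa [demand_eq_four_iff.2 h, demand_not_eq_zero (.inr h), across_eq_empty hP hT hp internal_y,
    across_eq_empty hP hT hp internal_tip] using closedDemand_le (w := w) (M := M) (b := b) hP hT hp

theorem closedDemand_le_four_of_inE2 (hT0 : ∀ k ∈ T, demand w M k ≠ 0)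
    (hT2 : ∀ k ∈ T, demand w M k ≤ 2) (hp : p ∈ P) (h : InE2 w M p b) :
    closedDemand w M T (p, b) ≤ 4 := by
  have across_le (u : U) := sum_across_demand_le_two (p := p) (u := u) hM hP hT hT0 hT2
  have := closedDemand_le (w := w) (M := M) (b := b) hP hT hp
  rw [demand_eq_two_iff.2 h, demand_not_eq_zero (.inl h)] at this
  obtain internal | internal := isInternal_of_inE2 hM h
  · rw [across_eq_empty hP hT hp internal, sum_empty] at this
    linarith [across_le (p.tip b)]
  · rw [across_eq_empty hP hT hp internal, sum_empty] at this
    linarith [across_le p.y]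

theorem card_across_y_le_one (hT1 : ∀ k ∈ T, InE1 M k.1) (hp : InE1 M p)
    (hmid : ¬ IsMidPaired M P p) : (across M T p p.y).card ≤ 1 := by
  by_contra! h
  obtain ⟨r, hr, hrT⟩ := exists_mid_of_one_lt_card_across hM hP hT h
  exact hmid ⟨hp, r, (mem_product.1 (hT (hrT true))).1, hT1 _ (hrT true), hr⟩

theorem closedDemand_le_four_or_exists_mid (hT1 : ∀ k ∈ T, InE1 M k.1) (hpT : (p, b) ∈ T)
    (hmid : ¬ IsMidPaired M P p) :
    closedDemand w M T (p, b) ≤ 4 ∨ ∃ r, s(p.tip b, r.y) ∈ M ∧ ∀ b', (r, b') ∈ T := by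
  have hp : p ∈ P := (mem_product.1 (hT hpT)).1
  have hE1 : InE1 M p := hT1 _ hpT
  have sum_across (u : U) : ∑ k ∈ across M T p u, demand w M k = (across M T p u).card :=
    (sum_congr rfl fun k hk => demand_eq_one_iff.2 (hT1 k (mem_filter.1 hk).1)).trans
      (card_eq_sum_ones _).symm
  refine or_iff_not_imp_right.2 fun h => ?_
  have card_tip : (across M T p (p.tip b)).card ≤ 1 :=
    not_lt.1 fun hlt => h (exists_mid_of_one_lt_card_across hM hP hT hlt)
  have card_y := card_across_y_le_one hM hP hT hT1 hE1 hmid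
  have := closedDemand_le (w := w) (M := M) (b := b) hP hT hp
  rw [sum_across, sum_across, demand_eq_one_iff.2 hE1, demand_eq_one_iff.2 hE1] at this
  linarith

theorem exists_closedDemand_le_four_of_inE1 (hT1 : ∀ k ∈ T, InE1 M k.1)
    (hne : ∃ h ∈ T, ¬ IsMidPaired M P h.1) :
    ∃ h ∈ T, ¬ IsMidPaired M P h.1 ∧ closedDemand w M T h ≤ 4 := by
  by_contra! hlt
  let D : Finset (P3 U × Bool) := {h ∈ T | ¬ IsMidPaired M P h.1}
  have mem_P {h : P3 U × Bool} (hh : h ∈ D) : h.1 ∈ P :=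
    (mem_product.1 (hT (mem_filter.1 hh).1)).1
  have exists_mid : ∀ h ∈ D, ∃ r, s(h.1.tip h.2, r.y) ∈ M ∧ ∀ b, (r, b) ∈ T := fun h hh =>
    (closedDemand_le_four_or_exists_mid hM hP hT hT1 (mem_filter.1 hh).1
      (mem_filter.1 hh).2).resolve_left (hlt h (mem_filter.1 hh).1 (mem_filter.1 hh).2).not_ge
  obtain ⟨h₀, h₀T, h₀mid⟩ := hne
  have : Nonempty (P3 U) := ⟨h₀.1⟩
  choose! r hr hrT using exists_mid
  have mem_D : ∀ h ∈ D, ∀ b, (r h, b) ∈ D := fun h hh b => mem_filter.2 ⟨hrT h hh b, fun hmid =>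
    tip_y_notMem_of_isMidPaired hM hP (mem_P hh) hmid (hr h hh)⟩
  have r_injOn : Set.InjOn r D := fun h hh k hk hhk => Prod.ext_iff.2 <|
    tip_inj hP (mem_P hh) (mem_P hk) (hM.left_unique (hr h hh) (hhk ▸ hr k hk))
  exact (ne_empty_of_mem (mem_filter.2 ⟨h₀T, h₀mid⟩)) (eq_empty_of_injOn_prod_bool mem_D r_injOn)

theorem exists_closedDemand_le_four (hT0 : ∀ k ∈ T, demand w M k ≠ 0)
    (hne : ∃ h ∈ T, ¬ IsMidPaired M P h.1) :
    ∃ h ∈ T, ¬ IsMidPaired M P h.1 ∧ closedDemand w M T h ≤ 4 := by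
  have mem_P {p : P3 U} {b : Bool} (h : (p, b) ∈ T) : p ∈ P := (mem_product.1 (hT h)).1
  have cases_T {p : P3 U} {b : Bool} (h : (p, b) ∈ T) := demand_ne_zero_iff.1 (hT0 _ h)
  by_cases h3 : ∃ p b, (p, b) ∈ T ∧ InE3 M p b
  · obtain ⟨p, b, hpT, h⟩ := h3
    exact ⟨(p, b), hpT, fun hmid => not_inE1_of_inE3 h hmid.1,
      closedDemand_le_four_of_inE3 hM hP hT (mem_P hpT) h⟩
  push Not at h3
  by_cases h2 : ∃ p b, (p, b) ∈ T ∧ InE2 w M p b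
  · obtain ⟨p, b, hpT, h⟩ := h2
    refine ⟨(p, b), hpT, fun hmid => not_inE1_of_inE2 h hmid.1,
      closedDemand_le_four_of_inE2 hM hP hT hT0 (fun ⟨q, b'⟩ hq => ?_) (mem_P hpT) h⟩
    obtain h | h | h := cases_T hq
    · exact (demand_eq_one_iff.2 h).trans_le one_le_two
    · exact (demand_eq_two_iff.2 h).le
    · exact (h3 q b' hq h).elim
  push Not at h2
  exact exists_closedDemand_le_four_of_inE1 hM hP hT (fun ⟨q, b'⟩ hq =>
    (cases_T hq).resolve_right (not_or.2 ⟨h2 q b' hq, h3 q b' hq⟩)) hne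

end Degeneracy

theorem exists_isMulticoloring_demand (hM : IsMatching M)
    (hP : (P : Set (P3 U)).PairwiseDisjoint P3.verts) (w : Sym2 U → ℝ) :
    ∃ S : P3 U × Bool → Finset (Bool × Bool), IsMulticoloring (conflictGraph M) (demand w M)
      {h ∈ P ×ˢ univ | demand w M h ≠ 0} S := by
  obtain ⟨S, hS⟩ := exists_isMulticoloring_isMidPaired (w := w) hM hP
  refine hS.exists_of_degenerate (fun h hh => ?_) fun T hTA hBT => ?_
  · rw [mem_filter] at hh ⊢
    exact ⟨hh.1, demand_ne_zero_iff.2 (.inl hh.2.1)⟩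
  have hT : T ⊆ P ×ˢ univ := hTA.trans (filter_subset _ _)
  obtain ⟨k, hkT, hkB⟩ := exists_of_ssubset hBT
  obtain ⟨h, hhT, hmid, hle⟩ := exists_closedDemand_le_four hM hP hT
    (fun k hk => (mem_filter.1 (hTA hk)).2)
    ⟨k, hkT, fun hmid => hkB (mem_filter.2 ⟨hT hkT, hmid⟩)⟩
  exact ⟨h, hhT, fun hB => hmid (mem_filter.1 hB).2, hle⟩

end Conflict

theorem statement_13_general {U : Type*} [DecidableEq U] (w : Sym2 U → ℝ) {M : Finset (Sym2 U)}
    (hM : IsMatching M) {P : Finset (P3 U)} (hP : (P : Set (P3 U)).PairwiseDisjoint P3.verts) :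
    ∃ N : Finset (Sym2 U), (∀ e ∈ N, goodEdge M e) ∧
      (∀ f ∈ M, ∀ e₁ ∈ N, ∀ e₂ ∈ N, shares f e₁ → shares f e₂ → e₁ = e₂) ∧
      (∀ e₁ ∈ N, ∀ e₂ ∈ N, e₁ ≠ e₂ → ∀ v : U, v ∈ e₁ → v ∈ e₂ → covered M v) ∧
      (1 / 4 : ℝ) * cw w M (Esub (psel P (cls6 M)) ∪ Esub (psel P (cls8 M))) +
        (1 / 2 : ℝ) * cw w M (X2 P M ∪ X3 w P M ∪ X4 w P M ∪ X7 P M) +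
        cw w M (X5 P M) ≤ cw w M N := by
  obtain ⟨S, hS⟩ := exists_isMulticoloring_demand hM hP w
  obtain ⟨I, hIA, hI, hsum⟩ := hS.exists_isIndepSet fun h => cost w M (h.1.edge h.2)
  have no_conflict : ∀ h ∈ I, ∀ k ∈ I, ∀ u ∈ h.1.edge h.2, ∀ v ∈ k.1.edge k.2,
      u = v ∨ s(u, v) ∈ M → h = k := fun h hh k hk u hu v hv huv =>
    by_contra fun hne => hI hh hk hne ⟨hne, u, hu, v, hv, huv⟩
  refine ⟨I.image fun h => h.1.edge h.2, ?_, fun f hf => ?_, ?_, ?_⟩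
  · exact forall_mem_image.2 fun h hh => goodEdge_of_demand_ne_zero (mem_filter.1 (hIA hh)).2
  · simp only [forall_mem_image]
    rintro h hh k hk ⟨u, huf, hu⟩ ⟨v, hvf, hv⟩
    rw [no_conflict h hh k hk u hu v hv]
    exact or_iff_not_imp_left.2 fun huv => (Sym2.mem_and_mem_iff huv).1 ⟨huf, hvf⟩ ▸ hf
  · simp only [forall_mem_image]
    intro h hh k hk hne v hv hv'
    exact (hne (by rw [no_conflict h hh k hk v hv v hv' (.inl rfl)])).elim
  · have cw_image : cw w M (I.image fun h => h.1.edge h.2) = ∑ h ∈ I, cost w M (h.1.edge h.2) :=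
      sum_image ((injOn_edge hP).mono (coe_subset.2 (hIA.trans (filter_subset _ _))))
    rw [sum_filter_of_ne fun _ _ => left_ne_zero_of_smul, sum_demand_nsmul_cost hP,
      ← cw_image, nsmul_eq_mul, Fintype.card_prod, Fintype.card_bool] at hsum
    push_cast at hsum
    linarith

theorem statement_13 (n : ℕ) (hn : Fintype.card V = n) (h3 : 3 ∣ n)
    (w : Sym2 V → ℝ) (hw : ∀ e : Sym2 V, 0 ≤ w e)
    (M : Finset (Sym2 V)) (hM : IsMaxMatchingOfSize w (n / 3) M)
    (Pstar : Finset (P3 V)) (hP : IsMaxPacking w Pstar) (hAss : Ass Pstar M) :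
    ∃ N : Finset (Sym2 V), (∀ e ∈ N, goodEdge M e) ∧
      (∀ f ∈ M, ∀ e₁ ∈ N, ∀ e₂ ∈ N, shares f e₁ → shares f e₂ → e₁ = e₂) ∧
      (∀ e₁ ∈ N, ∀ e₂ ∈ N, e₁ ≠ e₂ → ∀ v : V, v ∈ e₁ → v ∈ e₂ → covered M v) ∧
      (1 / 4 : ℝ) * cw w M (Esub (psel Pstar (cls6 M)) ∪ Esub (psel Pstar (cls8 M))) +
        (1 / 2 : ℝ) * cw w M (X2 Pstar M ∪ X3 w Pstar M ∪ X4 w Pstar M ∪ X7 Pstar M) +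
        cw w M (X5 Pstar M) ≤ cw w M N :=
  statement_13_general w hM.1 fun p hp q hq => hP.1.2.1 p hp q hq

end MW3PP
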